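/- Let Ψ(c,x) = 320 + ψ1(c) + ψ2(c)x + ψ3(c)x² + ψ4(c)x³ + ψ5(c)x⁴. Then Ψ(c,x) ≤ 320 for all real c, x with 1 < c ≤ 4511/4000 and 3/5 ≤ x ≤ 1. -/

import Mathlib

/-!
Expand `320 - Ψ(c, x)` in powers of `c - 1`. Each of the seven coefficients is a quartic in `x`
whose Bernstein coefficients on `[1/2, 1]` are all positive, so for `1 ≤ c` and `1/2 ≤ x ≤ 1`
every term of the expansion is nonnegative.
-/

/-- The polynomial `Ψ(c, x)`, over an arbitrary field; its lines carry `ψ₁(c)`, …, `ψ₅(c)`. -/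
def Psi {K : Type*} [Field K] (c x : K) : K :=
  320 + (-160 * c ^ 2 + 16 * c ^ 3 + 20 * c ^ 4 - 4 * c ^ 5 + (5 / 4) * c ^ 6) +
    (32 * c + 48 * c ^ 2 + 32 * c ^ 3 + 14 * c ^ 4 - 10 * c ^ 5 - (13 / 2) * c ^ 6) * x +
    (-256 + 64 * c + 276 * c ^ 2 - 48 * c ^ 3 - 82 * c ^ 4 + 8 * c ^ 5 + (29 / 4) * c ^ 6) * x ^ 2 +
    (320 - 32 * c - 272 * c ^ 2 - 32 * c ^ 3 + 76 * c ^ 4 + 10 * c ^ 5 - 7 * c ^ 6) * x ^ 3 +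
    (-64 - 64 * c + 48 * c ^ 2 + 32 * c ^ 3 - 12 * c ^ 4 - 4 * c ^ 5 + c ^ 6) * x ^ 4

section

variable {R : Type*} [CommRing R]

/-- The Taylor coefficients at `c = 1` of `4 * (320 - Psi c x)`, as polynomials in `x`. The factor
`4` clears the denominators of `Psi`. -/
def gapTaylorCoeff (x : R) : Fin 7 → R :=
  ![507 - 438 * x + 123 * x ^ 2 - 252 * x ^ 3 + 252 * x ^ 4,
    818 - 764 * x - 910 * x ^ 2 + 1440 * x ^ 3 - 264 * x ^ 4,
    53 - 122 * x + 685 * x ^ 2 - 332 * x ^ 3 - 188 * x ^ 4,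
    -324 + 568 * x + 604 * x ^ 2 - 928 * x ^ 3 + 144 * x ^ 4,
    -75 + 534 * x - 267 * x ^ 2 - 84 * x ^ 3 + 68 * x ^ 4,
    -14 + 196 * x - 206 * x ^ 2 + 128 * x ^ 3 - 8 * x ^ 4,
    -5 + 26 * x - 29 * x ^ 2 + 28 * x ^ 3 - 4 * x ^ 4]

/-- The coefficients of `gapTaylorCoeff x k` in the Bernstein form on `[1/2, 1]`: the entry
`(k, i)` multiplies `(2 * x - 1) ^ i * (1 - x) ^ (4 - i)`, so it includes the binomial factor.
Taking the entries in `ℕ` records that they are nonnegative. They are found by substituting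
`x = u + v`, `1 = 2 * u + v`, where `u = 1 - x` and `v = 2 * x - 1`. -/
def gapBernsteinCoeff : Matrix (Fin 7) (Fin 5) ℕ :=
  !![4848, 8184, 5127, 1476, 192;
     5952, 9000, 5426, 1880, 320;
     1760, 4400, 3865, 1268,  96;
       64, 2320, 2812,  944,  64;
     1904, 4760, 3993, 1388, 176;
      768, 1864, 1618,  632,  96;
       64,  192,  199,   92,  16]

theorem gapTaylorCoeff_eq_sum_bernstein (x : R) (k : Fin 7) :
    gapTaylorCoeff x k =
      ∑ i : Fin 5, gapBernsteinCoeff k i * ((2 * x - 1) ^ (i : ℕ) * (1 - x) ^ (4 - (i : ℕ))) := by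
  fin_cases k <;>
  · simp only [gapTaylorCoeff, gapBernsteinCoeff, Fin.sum_univ_five, Fin.zero_eta, Fin.mk_one,
      Fin.reduceFinMk, Matrix.of_apply, Matrix.cons_val, Fin.coe_ofNat_eq_mod, Nat.reduceMod,
      Nat.reduceSub, Nat.cast_ofNat]
    ring

theorem gapTaylorCoeff_nonneg [PartialOrder R] [IsOrderedRing R] {x : R}
    (hx0 : 1 ≤ 2 * x) (hx1 : x ≤ 1) (k : Fin 7) : 0 ≤ gapTaylorCoeff x k := by
  rw [gapTaylorCoeff_eq_sum_bernstein]
  exact Finset.sum_nonneg fun i _ ↦ mul_nonneg (Nat.cast_nonneg _) <|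
    mul_nonneg (pow_nonneg (sub_nonneg.mpr hx0) _) (pow_nonneg (sub_nonneg.mpr hx1) _)

end

section

variable {K : Type*} [Field K]

theorem four_mul_sub_Psi_eq_sum [CharZero K] (c x : K) :
    4 * (320 - Psi c x) = ∑ k : Fin 7, gapTaylorCoeff x k * (c - 1) ^ (k : ℕ) := by
  simp only [Psi, gapTaylorCoeff, Fin.sum_univ_seven, Matrix.cons_val, Fin.coe_ofNat_eq_mod,
    Nat.reduceMod]
  ring

theorem Psi_le_320_c_gt_one_general [LinearOrder K] [IsStrictOrderedRing K] {c x : K}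
    (hc : 1 ≤ c) (hx0 : 1 / 2 ≤ x) (hx1 : x ≤ 1) : Psi c x ≤ 320 := by
  have hd : 0 ≤ c - 1 := sub_nonneg.mpr hc
  have gap_nonneg : 0 ≤ 4 * (320 - Psi c x) := by
    rw [four_mul_sub_Psi_eq_sum]
    exact Finset.sum_nonneg fun k _ ↦
      mul_nonneg (gapTaylorCoeff_nonneg (by linarith) hx1 k) (pow_nonneg hd k)
  linarith

end

theorem Psi_le_320_c_gt_one (c x : ℝ) (hc0 : 1 < c) (hc1 : c ≤ 4511 / 4000)
    (hx0 : 3 / 5 ≤ x) (hx1 : x ≤ 1) :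
    320 + (-160 * c ^ 2 + 16 * c ^ 3 + 20 * c ^ 4 - 4 * c ^ 5 + (5 / 4) * c ^ 6) +
      (32 * c + 48 * c ^ 2 + 32 * c ^ 3 + 14 * c ^ 4 - 10 * c ^ 5 - (13 / 2) * c ^ 6) * x +
      (-256 + 64 * c + 276 * c ^ 2 - 48 * c ^ 3 - 82 * c ^ 4 + 8 * c ^ 5 + (29 / 4) * c ^ 6) * x ^ 2 +
      (320 - 32 * c - 272 * c ^ 2 - 32 * c ^ 3 + 76 * c ^ 4 + 10 * c ^ 5 - 7 * c ^ 6) * x ^ 3 +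
      (-64 - 64 * c + 48 * c ^ 2 + 32 * c ^ 3 - 12 * c ^ 4 - 4 * c ^ 5 + c ^ 6) * x ^ 4 ≤ 320 :=
  Psi_le_320_c_gt_one_general hc0.le (by linarith) hx1
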